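/- Fix integers m, n ≥ 1, an even integer δ ≥ 2, and D ∈ (0, 1/2] with D·n a natural number. Let C_b ⊆ (ZMod 2)^m be a linear subspace, let x(·) denote the random encoding of the degree-δ LDGM ensemble with m inputs and blocklength n, and let S be uniformly distributed on (ZMod 2)^n, independent of the ensemble. Define B := Σ_{z ∈ C_b, z ≠ 0} P(hammingDist(x(z), S) ≤ D·n ∣ wt(S) ≤ D·n). If B ≥ 1 and |C_b| · 2^{−n(1 − h(D))} ≥ B, then P(∃ z ∈ C_b with hammingDist(x(z), S) ≤ D·n) ≥ 1/(2(n+1)²). -/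

import Mathlib

/-!
The proof is a second-moment argument. Let `N` be the number of codewords `z ∈ C_b` whose
encoding lies within distance `k = D·n` of `S`. Translating `S` by `x(z)`, and using that `x` is
linear in `z` and that `C_b` is a subspace, the joint probability for a pair `(z, z')` depends only
on `z' - z` (`jointCount_translate`). With `p = P(wt(S) ≤ k)` and `M = |C_b|` this gives
`E N = M·p` and `E N² = M·p·(1 + B)`, where the summand `1` comes from the diagonal. The
Cauchy–Schwarz inequality (`sq_sum_card_le`) yields
`P(N > 0) ≥ M·p / (1 + B) ≥ M·p / (2·B)`.

It remains to bound `p` from below: the binomial law with parameters `n` and `k/n` has its mode at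
`k` (`binomial_term_le`), so that mode has mass at least `1/(n+1)`, which says that
`C(n,k) ≥ 2^{n·h(k/n)}/(n+1)` (`two_rpow_entropy_le`). Hence `M·p ≥ B/(n+1)`, which is even
slightly better than required.
-/

open Finset
open scoped BigOperators Classical

noncomputable section

/-- `ldgmBeta w δ = (1 - (1-2w)^δ)/2`: the Bernoulli parameter induced by an
input of relative weight `w` in the degree-`δ` LDGM ensemble. -/
def ldgmBeta (w : ℝ) (δ : ℕ) : ℝ := (1 - (1 - 2 * w) ^ δ) / 2

/-- `ldgmU D δ = (1 - (1-2D)^(1/δ))/2`. -/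
def ldgmU (D : ℝ) (δ : ℕ) : ℝ := (1 - (1 - 2 * D) ^ ((1 : ℝ) / δ)) / 2

/-- Binary entropy function (in bits). -/
def binEnt (x : ℝ) : ℝ := -(x * Real.logb 2 x) - (1 - x) * Real.logb 2 (1 - x)

/-- Binary Kullback–Leibler divergence (in bits). -/
def klBin (a p : ℝ) : ℝ := a * Real.logb 2 (a / p) + (1 - a) * Real.logb 2 ((1 - a) / (1 - p))

/-- Probability of the event `E` under the uniform distribution on the finite type `Ω`. -/
def unifP (Ω : Type*) [Fintype Ω] (E : Ω → Prop) : ℝ :=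
  ((Finset.univ.filter E).card : ℝ) / (Fintype.card Ω : ℝ)

/-- Conditional probability of `E` given `F` under the uniform distribution on `Ω`. -/
def unifCondP (Ω : Type*) [Fintype Ω] (E F : Ω → Prop) : ℝ :=
  unifP Ω (fun ω => E ω ∧ F ω) / unifP Ω F

/-- Expectation of `f` under the uniform distribution on the finite type `Ω`. -/
def unifE (Ω : Type*) [Fintype Ω] (f : Ω → ℝ) : ℝ :=
  (∑ ω : Ω, f ω) / (Fintype.card Ω : ℝ)

/-- The encoding map of the degree-`δ` LDGM ensemble with `m` inputs and blocklength `n`: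
given the random index choices `I`, the `j`-th codeword bit of `z` is
`z (I j 1) + ⋯ + z (I j δ)` (mod 2). -/
def ldgmEnc {m n δ : ℕ} (I : Fin n → Fin δ → Fin m) (z : Fin m → ZMod 2) :
    Fin n → ZMod 2 := fun j => ∑ i : Fin δ, z (I j i)

/-! ### Uniform probabilities and linearity of the encoder -/

/-- The decidability instance used for counting the event is immaterial. -/
theorem unifP_eq (Ω : Type*) [Fintype Ω] (E : Ω → Prop) [DecidablePred E] :
    unifP Ω E = ((univ.filter E).card : ℝ) / (Fintype.card Ω : ℝ) := by
  unfold unifP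
  congr!

theorem ldgmEnc_sub {m n δ : ℕ} (I : Fin n → Fin δ → Fin m) (z w : Fin m → ZMod 2) :
    ldgmEnc I (z - w) = ldgmEnc I z - ldgmEnc I w := by
  funext j
  simp [ldgmEnc, Finset.sum_sub_distrib]

theorem ldgmEnc_zero {m n δ : ℕ} (I : Fin n → Fin δ → Fin m) :
    ldgmEnc I (0 : Fin m → ZMod 2) = 0 := by
  funext j
  simp [ldgmEnc]

/-! ### Entropy bound for the Hamming ball -/

/-- The terms of the expansion of `(k + (n - k)) ^ n` increase up to index `k` and decrease
afterwards, i.e. the binomial law with parameters `n` and `k / n` has its mode at `k`. -/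
theorem binomial_term_le (n k : ℕ) (hk : k ≤ n) (i : ℕ) (hi : i ≤ n) :
    k ^ i * (n - k) ^ (n - i) * n.choose i ≤ k ^ k * (n - k) ^ (n - k) * n.choose k := by
  obtain ⟨l, rfl⟩ := Nat.exists_eq_add_of_le hk
  simp only [Nat.add_sub_cancel_left]
  rcases le_total i k with h | h
  · induction h using Nat.decreasingInduction with
    | self => simp
    | of_succ i h ih =>
      refine le_trans ?_ (ih (by omega))
      have h1 := Nat.choose_succ_right_eq (k + l) i
      obtain ⟨d, hd⟩ := Nat.exists_eq_add_of_le (show i + 1 ≤ k from h)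
      have e1 : k + l - i = (d + l) + 1 := by omega
      have e2 : k + l - (i + 1) = d + l := by omega
      rw [e1] at h1
      rw [e1, e2]
      refine Nat.le_of_mul_le_mul_right ?_ (show 0 < i + 1 by omega)
      calc k ^ i * l ^ (d + l + 1) * (k + l).choose i * (i + 1)
          = k ^ i * l ^ (d + l) * (k + l).choose i * (l * (i + 1)) := by ring
        _ ≤ k ^ i * l ^ (d + l) * (k + l).choose i * (k * (d + l + 1)) := by
            refine Nat.mul_le_mul_left _ ?_
            subst hd; nlinarith
        _ = k ^ (i + 1) * l ^ (d + l) * ((k + l).choose i * (d + l + 1)) := by ring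
        _ = _ := by rw [← h1]; ring
  · induction i, h using Nat.le_induction with
    | base => simp
    | succ i h ih =>
      refine le_trans ?_ (ih (by omega))
      have h1 := Nat.choose_succ_right_eq (k + l) i
      obtain ⟨d, hd⟩ := Nat.exists_eq_add_of_le h
      obtain ⟨e, he⟩ := Nat.exists_eq_add_of_le hi
      have e1 : k + l - i = e + 1 := by omega
      have e2 : k + l - (i + 1) = e := by omega
      have e3 : l = d + 1 + e := by omega
      rw [e1] at h1
      rw [e1, e2]
      refine Nat.le_of_mul_le_mul_right ?_ (show 0 < i + 1 by omega)
      calc k ^ (i + 1) * l ^ e * (k + l).choose (i + 1) * (i + 1)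
          = k ^ (i + 1) * l ^ e * ((k + l).choose (i + 1) * (i + 1)) := by ring
        _ = k ^ i * l ^ e * (k + l).choose i * (k * (e + 1)) := by rw [h1]; ring
        _ ≤ k ^ i * l ^ e * (k + l).choose i * (l * (i + 1)) := by
            refine Nat.mul_le_mul_left _ ?_
            subst hd; subst e3; nlinarith
        _ = _ := by ring

theorem pow_le_succ_mul_mode (n k : ℕ) (hk : k ≤ n) :
    n ^ n ≤ (n + 1) * (k ^ k * (n - k) ^ (n - k) * n.choose k) := by
  calc n ^ n = (k + (n - k)) ^ n := by rw [Nat.add_sub_cancel' hk]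
    _ = ∑ i ∈ range (n + 1), k ^ i * (n - k) ^ (n - i) * n.choose i := by
        rw [add_pow]; simp
    _ ≤ ∑ i ∈ range (n + 1), k ^ k * (n - k) ^ (n - k) * n.choose k :=
        sum_le_sum fun i hi => binomial_term_le n k hk i (by simpa [Nat.lt_succ_iff] using hi)
    _ = _ := by simp

/-- For `D = k / n`, the lower bound `2 ^ (n·h(D)) / (n + 1)` on the binomial coefficient `C(n, k)`:
the mode of a law on `n + 1` points has mass at least `1 / (n + 1)`. -/
theorem two_rpow_entropy_le (n k : ℕ) (hn : 1 ≤ n) (D : ℝ) (hD0 : 0 < D) (hD1 : D < 1)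
    (hk : (k : ℝ) = D * n) :
    (2 : ℝ) ^ ((n : ℝ) * binEnt D) ≤ (n + 1) * n.choose k := by
  have hn0 : (0 : ℝ) < n := by exact_mod_cast hn
  have hkn : k ≤ n := by
    have : (k : ℝ) ≤ n := by rw [hk]; nlinarith
    exact_mod_cast this
  have hl : ((n - k : ℕ) : ℝ) = (1 - D) * n := by
    rw [Nat.cast_sub hkn, hk]; ring
  have h1D : 0 < 1 - D := by linarith
  have hexp : (n : ℝ) * binEnt D
      = -(Real.logb 2 (D ^ k * (1 - D) ^ (n - k))) := by
    rw [Real.logb_mul (by positivity) (by positivity), Real.logb_pow, Real.logb_pow, hl, hk, binEnt]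
    ring
  rw [hexp, Real.rpow_neg (by norm_num),
    Real.rpow_logb (by norm_num) (by norm_num) (by positivity)]
  have hm : (n : ℝ) ^ n ≤ (n + 1) * ((k : ℝ) ^ k * ((n - k : ℕ) : ℝ) ^ (n - k) * n.choose k) := by
    exact_mod_cast pow_le_succ_mul_mode n k hkn
  rw [hl, hk, mul_pow, mul_pow] at hm
  have hnn : (n : ℝ) ^ k * (n : ℝ) ^ (n - k) = (n : ℝ) ^ n := by
    rw [← pow_add, Nat.add_sub_cancel' hkn]
  have hpos : (0 : ℝ) < (n : ℝ) ^ n := by positivity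
  rw [inv_le_iff_one_le_mul₀ (by positivity)]
  refine le_of_mul_le_mul_right ?_ hpos
  calc 1 * (n : ℝ) ^ n ≤ _ := (one_mul _).trans_le hm
    _ = (n + 1) * n.choose k * (D ^ k * (1 - D) ^ (n - k)) *
          ((n : ℝ) ^ k * (n : ℝ) ^ (n - k)) := by ring
    _ = _ := by rw [hnn]

theorem choose_le_card_ball (n k : ℕ) :
    n.choose k ≤ (univ.filter fun s : Fin n → ZMod 2 => hammingNorm s ≤ k).card := by
  have h : n.choose k = (powersetCard k (univ : Finset (Fin n))).card := by simp
  rw [h]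
  refine card_le_card_of_injOn (fun t j => if j ∈ t then 1 else 0) ?_ ?_
  · intro t ht
    have ht' : t.card = k := by simpa using ht
    have : hammingNorm (fun j => if j ∈ t then (1 : ZMod 2) else 0) = k := by
      simp [hammingNorm, ht']
    simp [this]
  · intro t _ u _ h
    ext j
    have hj := congrFun h j
    by_cases h1 : j ∈ t <;> by_cases h2 : j ∈ u <;> simp_all

/-! ### Second moment of the number of good codewords -/

/-- The second-moment method in counting form: if `N ω` is the number of `z ∈ C` with `G z ω`, then
Cauchy–Schwarz bounds `(∑ N)²` by `#{N > 0} · ∑ N²`. -/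
theorem sq_sum_card_le {α Ω : Type*} [Fintype Ω] (C : Finset α) (G : α → Ω → Prop)
    [∀ z, DecidablePred (G z)] :
    (∑ z ∈ C, ((univ.filter fun ω => G z ω).card : ℝ)) ^ 2 ≤
      ((univ.filter fun ω => ∃ z ∈ C, G z ω).card : ℝ) *
        ∑ z ∈ C, ∑ w ∈ C, ((univ.filter fun ω => G z ω ∧ G w ω).card : ℝ) := by
  set U := univ.filter fun ω => ∃ z ∈ C, G z ω with hU
  let N : Ω → ℝ := fun ω => ∑ z ∈ C, if G z ω then 1 else 0
  have hN : ∀ ω, ω ∉ U → N ω = 0 := by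
    intro ω hω
    refine sum_eq_zero fun z hz => ?_
    rw [if_neg]
    exact fun hg => hω (by simp only [hU, mem_filter, mem_univ, true_and]; exact ⟨z, hz, hg⟩)
  have h1 : ∑ z ∈ C, ((univ.filter fun ω => G z ω).card : ℝ) = ∑ ω ∈ U, N ω := by
    rw [sum_subset (subset_univ U) fun ω _ h => hN ω h, sum_comm]
    simp
  have h2 : ∑ z ∈ C, ∑ w ∈ C, ((univ.filter fun ω => G z ω ∧ G w ω).card : ℝ)
      = ∑ ω ∈ U, N ω ^ 2 := by
    rw [sum_subset (subset_univ U) fun ω _ h => by rw [hN ω h]; simp]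
    simp only [N, sq, sum_mul_sum]
    symm
    rw [sum_comm]
    refine sum_congr rfl fun z _ => ?_
    rw [sum_comm]
    refine sum_congr rfl fun w _ => ?_
    rw [← sum_boole (R := ℝ)]
    refine sum_congr rfl fun ω _ => ?_
    by_cases ha : G z ω <;> by_cases hb : G w ω <;> simp [ha, hb]
  rw [h1, h2]
  exact sq_sum_le_card_mul_sum_sq

/-- The number of outcomes (index choices and source word) for which the encodings of `z` and of `w`
are both within distance `k` of the source word. -/
def jointCount (m n δ k : ℕ) (z w : Fin m → ZMod 2) : ℕ :=
  (univ.filter fun ω : (Fin n → Fin δ → Fin m) × (Fin n → ZMod 2) =>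
    hammingDist (ldgmEnc ω.1 z) ω.2 ≤ k ∧ hammingDist (ldgmEnc ω.1 w) ω.2 ≤ k).card

/-- The joint count is invariant under translation, by the substitution `S ↦ S - x(z)`. -/
theorem jointCount_translate (m n δ k : ℕ) (z w : Fin m → ZMod 2) :
    jointCount m n δ k z w = jointCount m n δ k 0 (w - z) := by
  have key : ∀ a b c : Fin n → ZMod 2, hammingDist (a - c) (b - c) = hammingDist a b := by
    intro a b c
    rw [hammingDist_eq_hammingNorm, hammingDist_eq_hammingNorm, neg_add_eq_sub, neg_add_eq_sub,
      sub_sub_sub_cancel_right]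
  refine card_bij' (fun ω _ => (ω.1, ω.2 - ldgmEnc ω.1 z)) (fun ω _ => (ω.1, ω.2 + ldgmEnc ω.1 z))
    ?_ ?_ ?_ ?_
  · rintro ⟨I, s⟩ h
    simp only [mem_filter, mem_univ, true_and] at h ⊢
    rw [ldgmEnc_sub, key, ← sub_self z, ldgmEnc_sub, key]
    exact h
  · rintro ⟨I, s⟩ h
    simp only [mem_filter, mem_univ, true_and] at h ⊢
    rw [← key _ _ (ldgmEnc I z), ← key (ldgmEnc I w) _ (ldgmEnc I z), ← ldgmEnc_sub, ← ldgmEnc_sub]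
    simpa using h
  · rintro ⟨I, s⟩ _; simp
  · rintro ⟨I, s⟩ _; simp

theorem jointCount_zero_zero (m n δ k : ℕ) :
    jointCount m n δ k 0 0 = Fintype.card (Fin n → Fin δ → Fin m) *
      (univ.filter fun s : Fin n → ZMod 2 => hammingNorm s ≤ k).card := by
  rw [jointCount, ← card_univ, ← card_product]
  congr 1
  ext ⟨I, s⟩
  simp [ldgmEnc_zero]

/-! ### Existence of a good codeword -/

/-- with `B` the sum of conditional pairwise probabilities over the nonzero
codewords of the bottom code, if `B ≥ 1` and `|C_b|·2^{-n(1-h(D))} ≥ B`, then with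
probability at least `1/(2(n+1)²)` some codeword of the compound code is within Hamming
distance `D·n` of the uniform source `S`. -/
theorem good_codeword_exists_polynomial_probability (m n δ : ℕ) (hm : 1 ≤ m) (hn : 1 ≤ n)
    (hδeven : Even δ) (hδ : 2 ≤ δ)
    (D : ℝ) (hD : D ∈ Set.Ioc (0 : ℝ) (1 / 2)) (hDn : ∃ k : ℕ, (k : ℝ) = D * n)
    (Cb : Submodule (ZMod 2) (Fin m → ZMod 2))
    (B : ℝ)
    (hBdef : B = ∑ z : Fin m → ZMod 2,
        if z ∈ Cb ∧ z ≠ 0 then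
          unifCondP ((Fin n → Fin δ → Fin m) × (Fin n → ZMod 2))
            (fun ω => (hammingDist (ldgmEnc ω.1 z) ω.2 : ℝ) ≤ D * n)
            (fun ω => (hammingNorm ω.2 : ℝ) ≤ D * n)
        else 0)
    (hB1 : 1 ≤ B)
    (hB2 : B ≤ (Nat.card Cb : ℝ) * (2 : ℝ) ^ (-(n : ℝ) * (1 - binEnt D))) :
    unifP ((Fin n → Fin δ → Fin m) × (Fin n → ZMod 2))
        (fun ω => ∃ z ∈ Cb, (hammingDist (ldgmEnc ω.1 z) ω.2 : ℝ) ≤ D * n) ≥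
      1 / (2 * ((n : ℝ) + 1) ^ 2) := by
  obtain ⟨hD0, hD2⟩ := hD
  obtain ⟨k, hk⟩ := hDn
  rw [← hk] at hBdef ⊢
  simp only [Nat.cast_le] at hBdef ⊢
  have : Nonempty (Fin m) := ⟨⟨0, hm⟩⟩
  set C : Finset (Fin m → ZMod 2) := univ.filter fun z => z ∈ Cb with hC
  have hmemC : ∀ z, z ∈ C ↔ z ∈ Cb := by simp [hC]
  set a : ℝ := (Fintype.card (Fin n → Fin δ → Fin m) : ℝ) with ha
  have ha0 : 0 < a := by
    rw [ha]; exact_mod_cast Fintype.card_pos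
  set V : ℝ := ((univ.filter fun s : Fin n → ZMod 2 => hammingNorm s ≤ k).card : ℝ) with hV
  have hV0 : 0 < V := by
    have : 0 < (univ.filter fun s : Fin n → ZMod 2 => hammingNorm s ≤ k).card :=
      card_pos.mpr ⟨0, by simp⟩
    rw [hV]; exact_mod_cast this
  have hT : (Fintype.card ((Fin n → Fin δ → Fin m) × (Fin n → ZMod 2)) : ℝ) = a * 2 ^ n := by
    rw [Fintype.card_prod, Nat.cast_mul, ha]
    simp [ZMod.card]
  have hq : (jointCount m n δ k 0 0 : ℝ) = a * V := by
    rw [jointCount_zero_zero, Nat.cast_mul]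
  have hM : (Nat.card Cb : ℝ) = C.card := by
    rw [Nat.card_eq_fintype_card, hC, Fintype.card_subtype]
  have hM0 : (0 : ℝ) < C.card := by
    have : 0 < C.card := card_pos.mpr ⟨0, (hmemC 0).2 Cb.zero_mem⟩
    exact_mod_cast this
  have hcond : ∀ z : Fin m → ZMod 2,
      unifCondP ((Fin n → Fin δ → Fin m) × (Fin n → ZMod 2))
        (fun ω => hammingDist (ldgmEnc ω.1 z) ω.2 ≤ k) (fun ω => hammingNorm ω.2 ≤ k)
      = (jointCount m n δ k 0 z : ℝ) / (a * V) := by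
    intro z
    have e1 : (univ.filter fun ω : (Fin n → Fin δ → Fin m) × (Fin n → ZMod 2) =>
        hammingDist (ldgmEnc ω.1 z) ω.2 ≤ k ∧ hammingNorm ω.2 ≤ k).card
        = jointCount m n δ k 0 z := by
      simp only [jointCount, ldgmEnc_zero, hammingDist_zero_left, and_comm]
    have e2 : (univ.filter fun ω : (Fin n → Fin δ → Fin m) × (Fin n → ZMod 2) =>
        hammingNorm ω.2 ≤ k).card = jointCount m n δ k 0 0 := by
      simp only [jointCount, ldgmEnc_zero, hammingDist_zero_left, and_self]
    rw [unifCondP, unifP_eq, unifP_eq, e1, e2, hq, hT]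
    exact div_div_div_cancel_right₀ (by positivity) _ _
  have hsum0 : ∑ w ∈ C, (jointCount m n δ k 0 w : ℝ) = a * V * (1 + B) := by
    simp only [hcond] at hBdef
    rw [← sum_filter] at hBdef
    have hCe : (univ.filter fun z : Fin m → ZMod 2 => z ∈ Cb ∧ z ≠ 0) = C.erase 0 := by
      ext z; simp [hmemC, and_comm]
    rw [hCe, ← sum_div] at hBdef
    rw [← add_sum_erase C _ ((hmemC 0).2 Cb.zero_mem), hq, hBdef]
    field_simp
  have hsum : ∀ z ∈ C, ∑ w ∈ C, (jointCount m n δ k z w : ℝ) = a * V * (1 + B) := by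
    intro z hz
    rw [← hsum0]
    refine sum_bij' (fun w _ => w - z) (fun w _ => w + z) ?_ ?_ ?_ ?_ ?_
    · intro w hw
      exact (hmemC _).2 (Cb.sub_mem ((hmemC _).1 hw) ((hmemC _).1 hz))
    · intro w hw
      exact (hmemC _).2 (Cb.add_mem ((hmemC _).1 hw) ((hmemC _).1 hz))
    · intro w _; simp
    · intro w _; simp
    · intro w _; rw [jointCount_translate]
  have hdiag : ∀ z : Fin m → ZMod 2,
      ((univ.filter fun ω : (Fin n → Fin δ → Fin m) × (Fin n → ZMod 2) =>
        hammingDist (ldgmEnc ω.1 z) ω.2 ≤ k).card : ℝ) = a * V := by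
    intro z
    have := jointCount_translate m n δ k z z
    rw [sub_self] at this
    rw [← hq, ← this]
    simp only [jointCount, and_self]
  have hCS := sq_sum_card_le C
    (fun z (ω : (Fin n → Fin δ → Fin m) × (Fin n → ZMod 2)) =>
      hammingDist (ldgmEnc ω.1 z) ω.2 ≤ k)
  rw [sum_congr rfl fun z _ => hdiag z] at hCS
  have hS : ∑ z ∈ C, ∑ w ∈ C,
      ((univ.filter fun ω : (Fin n → Fin δ → Fin m) × (Fin n → ZMod 2) =>
        hammingDist (ldgmEnc ω.1 z) ω.2 ≤ k ∧ hammingDist (ldgmEnc ω.1 w) ω.2 ≤ k).card : ℝ)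
      = C.card * (a * V * (1 + B)) := by
    rw [← nsmul_eq_mul, ← sum_const]
    exact sum_congr rfl hsum
  rw [hS, sum_const, nsmul_eq_mul] at hCS
  simp only [hmemC] at hCS
  rw [unifP_eq, hT]
  set U : ℝ := ((univ.filter fun ω : (Fin n → Fin δ → Fin m) × (Fin n → ZMod 2) =>
    ∃ z ∈ Cb, hammingDist (ldgmEnc ω.1 z) ω.2 ≤ k).card : ℝ) with hU
  have hmain : (C.card : ℝ) * (a * V) ≤ U * (1 + B) := by
    refine le_of_mul_le_mul_right ?_ (show 0 < (C.card : ℝ) * (a * V) by positivity)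
    calc _ = ((C.card : ℝ) * (a * V)) ^ 2 := by ring
      _ ≤ _ := hCS
      _ = _ := by ring
  have hU0 : 0 ≤ U := Nat.cast_nonneg _
  have hVent : (2 : ℝ) ^ ((n : ℝ) * binEnt D) ≤ (n + 1) * V := by
    refine (two_rpow_entropy_le n k hn D hD0 (by linarith) hk).trans ?_
    have : (n.choose k : ℝ) ≤ V := by
      rw [hV]; exact_mod_cast choose_le_card_ball n k
    gcongr
  have hB3 : B * 2 ^ n ≤ C.card * ((n + 1) * V) := by
    have hsplit : (2 : ℝ) ^ (-(n : ℝ) * (1 - binEnt D)) * 2 ^ n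
        = (2 : ℝ) ^ ((n : ℝ) * binEnt D) := by
      rw [← Real.rpow_natCast, ← Real.rpow_add (by norm_num)]
      congr 1; ring
    calc B * 2 ^ n ≤ (Nat.card Cb : ℝ) * (2 : ℝ) ^ (-(n : ℝ) * (1 - binEnt D)) * 2 ^ n := by
          gcongr
      _ = C.card * (2 : ℝ) ^ ((n : ℝ) * binEnt D) := by rw [mul_assoc, hsplit, hM]
      _ ≤ _ := by gcongr
  have hfin : a * 2 ^ n ≤ U * (2 * (n + 1)) := by
    refine le_of_mul_le_mul_right ?_ (show 0 < B by linarith)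
    calc a * 2 ^ n * B = a * (B * 2 ^ n) := by ring
      _ ≤ a * (C.card * ((n + 1) * V)) := by gcongr
      _ = (n + 1) * (C.card * (a * V)) := by ring
      _ ≤ (n + 1) * (U * (1 + B)) := by gcongr
      _ ≤ (n + 1) * (U * (B + B)) := by gcongr
      _ = _ := by ring
  rw [ge_iff_le, div_le_div_iff₀ (by positivity) (by positivity), one_mul]
  refine hfin.trans ?_
  have hn0 : (0 : ℝ) ≤ n := Nat.cast_nonneg n
  gcongr
  nlinarith
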